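/- Let Π ⊆ ℝ^d be a closed convex set with 0 ∈ Π, δ ∈ (0,1), r ≥ 0, σ an invertible d×d real matrix, and 𝔹 ⊆ ℝ^d a nonempty compact set. Define, for z ∈ ℝ^d, h(z) = inf over b ∈ 𝔹 of [ −(1/2)δ(1−δ) · dist²( (σ⁻¹(b − r𝟙) + z)/(1−δ), σᵀΠ ) + (1/2)(δ/(1−δ)) ‖σ⁻¹(b − r𝟙) + z‖² ] + δr, where σᵀΠ = { σᵀp : p ∈ Π }. Then there exists a constant K > 0 such that for all z₁, z₂ ∈ ℝ^d, |h(z₁) − h(z₂)| ≤ K (1 + ‖z₁‖ + ‖z₂‖) ‖z₁ − z₂‖, and |h(0)| ≤ K. -/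

import Mathlib

open Matrix

/-- Matrix–vector multiplication on Euclidean space. -/
noncomputable def mvE {d : ℕ} (M : Matrix (Fin d) (Fin d) ℝ) (v : EuclideanSpace ℝ (Fin d)) :
    EuclideanSpace ℝ (Fin d) :=
  (WithLp.equiv 2 (Fin d → ℝ)).symm (M.mulVec (WithLp.equiv 2 (Fin d → ℝ) v))

/-!
The distance to a set and the norm are Lipschitz, and the square of a Lipschitz function has a
Lipschitz constant on each ball that grows linearly with the radius. This class of functions is
stable under linear combinations, is preserved by translations with a constant that is uniform over
bounded sets of translation vectors, and is stable under infima of families with a common constant.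
-/

open Bornology
open scoped NNReal

/-- Lipschitz continuity of a real function with a local constant that grows linearly in the norms
of the two arguments. The constant `K` is part of the data so that families of functions can share
it. -/
def LipschitzWithLinearGrowth {E : Type*} [SeminormedAddCommGroup E] (K : ℝ≥0) (f : E → ℝ) : Prop :=
  ∀ x y, |f x - f y| ≤ K * (1 + ‖x‖ + ‖y‖) * ‖x - y‖

namespace LipschitzWithLinearGrowth

variable {E X : Type*} [SeminormedAddCommGroup E] {f g : E → ℝ} {K L : ℝ≥0}

lemma of_le_add (hf : ∀ x y, f x ≤ f y + K * (1 + ‖x‖ + ‖y‖) * ‖x - y‖) :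
    LipschitzWithLinearGrowth K f := by
  intro x y
  have hyx := hf y x
  rw [norm_sub_rev, add_right_comm] at hyx
  exact abs_sub_le_iff.2 ⟨sub_le_iff_le_add'.2 (hf x y), sub_le_iff_le_add'.2 hyx⟩

lemma le_add (hf : LipschitzWithLinearGrowth K f) (x y : E) :
    f x ≤ f y + K * (1 + ‖x‖ + ‖y‖) * ‖x - y‖ :=
  sub_le_iff_le_add'.1 ((le_abs_self _).trans (hf x y))

lemma mono (hf : LipschitzWithLinearGrowth K f) (hKL : K ≤ L) :
    LipschitzWithLinearGrowth L f := fun x y ↦ (hf x y).trans (by gcongr)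

lemma add (hf : LipschitzWithLinearGrowth K f) (hg : LipschitzWithLinearGrowth L g) :
    LipschitzWithLinearGrowth (K + L) (fun x ↦ f x + g x) := by
  intro x y
  calc |f x + g x - (f y + g y)|
      = |(f x - f y) + (g x - g y)| := by ring_nf
    _ ≤ |f x - f y| + |g x - g y| := abs_add_le _ _
    _ ≤ K * (1 + ‖x‖ + ‖y‖) * ‖x - y‖ + L * (1 + ‖x‖ + ‖y‖) * ‖x - y‖ :=
        add_le_add (hf x y) (hg x y)
    _ = ↑(K + L) * (1 + ‖x‖ + ‖y‖) * ‖x - y‖ := by push_cast; ring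

lemma add_const (hf : LipschitzWithLinearGrowth K f) (t : ℝ) :
    LipschitzWithLinearGrowth K (fun x ↦ f x + t) := fun x y ↦ by
  simpa only [add_sub_add_right_eq_sub] using hf x y

lemma const_mul (hf : LipschitzWithLinearGrowth K f) (α : ℝ) :
    LipschitzWithLinearGrowth (‖α‖₊ * K) (fun x ↦ α * f x) := by
  intro x y
  calc |α * f x - α * f y|
      = |α| * |f x - f y| := by rw [← mul_sub, abs_mul]
    _ ≤ |α| * (K * (1 + ‖x‖ + ‖y‖) * ‖x - y‖) := by gcongr; exact hf x y
    _ = ↑(‖α‖₊ * K) * (1 + ‖x‖ + ‖y‖) * ‖x - y‖ := by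
        rw [NNReal.coe_mul, coe_nnnorm, Real.norm_eq_abs]; ring

lemma sq_of_lipschitzWith (hg : LipschitzWith L g) :
    LipschitzWithLinearGrowth (L * (2 * ‖g 0‖₊ + L)) (fun x ↦ g x ^ 2) := by
  have h_abs (x : E) : |g x| ≤ |g 0| + L * ‖x‖ := by
    have h_dist := hg.dist_le_mul x 0
    rw [Real.dist_eq, dist_zero_right] at h_dist
    linarith [abs_sub_abs_le_abs_sub (g x) (g 0)]
  intro x y
  have h_sum : |g x + g y| ≤ (2 * |g 0| + L) * (1 + ‖x‖ + ‖y‖) := by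
    calc |g x + g y|
        ≤ (|g 0| + L * ‖x‖) + (|g 0| + L * ‖y‖) :=
          (abs_add_le _ _).trans (add_le_add (h_abs x) (h_abs y))
      _ ≤ (2 * |g 0| + L) * (1 + ‖x‖ + ‖y‖) := by
          have : 0 ≤ 2 * |g 0| * (‖x‖ + ‖y‖) + L := by positivity
          linarith
  calc |g x ^ 2 - g y ^ 2|
      = |g x + g y| * |g x - g y| := by rw [sq_sub_sq, abs_mul]
    _ ≤ ((2 * |g 0| + L) * (1 + ‖x‖ + ‖y‖)) * (L * ‖x - y‖) := by
        gcongr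
        rw [← Real.dist_eq, ← dist_eq_norm]
        exact hg.dist_le_mul x y
    _ = ↑(L * (2 * ‖g 0‖₊ + L)) * (1 + ‖x‖ + ‖y‖) * ‖x - y‖ := by
        push_cast
        rw [Real.norm_eq_abs]
        ring

lemma comp_const_add (hf : LipschitzWithLinearGrowth K f) {a : E} {M : ℝ≥0} (ha : ‖a‖ ≤ M) :
    LipschitzWithLinearGrowth (K * (1 + 2 * M)) (fun z ↦ f (a + z)) := by
  intro x y
  have h_growth : 1 + ‖a + x‖ + ‖a + y‖ ≤ (1 + 2 * M) * (1 + ‖x‖ + ‖y‖) := by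
    have : 0 ≤ 2 * M * (‖x‖ + ‖y‖) := by positivity
    linarith [norm_add_le a x, norm_add_le a y]
  calc |f (a + x) - f (a + y)|
      ≤ K * (1 + ‖a + x‖ + ‖a + y‖) * ‖x - y‖ := by
        simpa only [add_sub_add_left_eq_sub] using hf (a + x) (a + y)
    _ ≤ K * ((1 + 2 * M) * (1 + ‖x‖ + ‖y‖)) * ‖x - y‖ := by gcongr
    _ = ↑(K * (1 + 2 * M)) * (1 + ‖x‖ + ‖y‖) * ‖x - y‖ := by push_cast; ring

lemma isBounded_image (hf : LipschitzWithLinearGrowth K f) {s : Set E} (hs : IsBounded s) :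
    IsBounded (f '' s) := by
  obtain ⟨R, hR⟩ := hs.exists_norm_le
  refine (Metric.isBounded_closedBall (x := f 0) (r := K * (1 + R) * R)).subset ?_
  rintro _ ⟨x, hx, rfl⟩
  have hxR := hR x hx
  have hR_nonneg : 0 ≤ R := (norm_nonneg x).trans hxR
  calc |f x - f 0|
      ≤ K * (1 + ‖x‖) * ‖x‖ := by simpa only [norm_zero, add_zero, sub_zero] using hf x 0
    _ ≤ K * (1 + R) * R := by gcongr

lemma sInf_image {f : X → E → ℝ} {B : Set X} (hB : B.Nonempty)
    (hf : ∀ b ∈ B, LipschitzWithLinearGrowth K (f b))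
    (hbdd : ∀ z, BddBelow ((fun b ↦ f b z) '' B)) :
    LipschitzWithLinearGrowth K (fun z ↦ sInf ((fun b ↦ f b z) '' B)) := by
  refine of_le_add fun x y ↦ ?_
  rw [← sub_le_iff_le_add]
  refine le_csInf (hB.image _) ?_
  rintro _ ⟨b, hb, rfl⟩
  rw [sub_le_iff_le_add]
  exact (csInf_le (hbdd x) (Set.mem_image_of_mem _ hb)).trans ((hf b hb).le_add x y)

lemma sInf_image_translate (hf : LipschitzWithLinearGrowth K f) {B : Set X} (hB : B.Nonempty)
    {m : X → E} (hm : IsBounded (m '' B)) :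
    ∃ L, LipschitzWithLinearGrowth L (fun z ↦ sInf ((fun b ↦ f (m b + z)) '' B)) := by
  obtain ⟨M, hM⟩ := hm.exists_norm_le
  refine ⟨K * (1 + 2 * M.toNNReal), sInf_image (f := fun b z ↦ f (m b + z)) hB ?_ fun z ↦ ?_⟩
  · exact fun b hb ↦ hf.comp_const_add
      ((hM _ (Set.mem_image_of_mem m hb)).trans (Real.le_coe_toNNReal M))
  · have h_translate := hf.isBounded_image (hm.add (isBounded_singleton (x := z)))
    rw [Set.add_singleton, Set.image_image, Set.image_image] at h_translate
    exact h_translate.bddBelow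

end LipschitzWithLinearGrowth

lemma lipschitzWith_infDist_const_smul {E : Type*} [SeminormedAddCommGroup E] [NormedSpace ℝ E]
    (c : ℝ) (S : Set E) : LipschitzWith ‖c‖₊ (fun u ↦ Metric.infDist (c • u) S) :=
  one_mul ‖c‖₊ ▸ (Metric.lipschitz_infDist_pt S).comp (lipschitzWith_smul c)

lemma continuous_mvE {d : ℕ} (M : Matrix (Fin d) (Fin d) ℝ) : Continuous (mvE M) :=
  (Matrix.toEuclideanLin M).continuous_of_finiteDimensional

theorem stmt_14_general {E X : Type*} [SeminormedAddCommGroup E] {g : E → ℝ} {L : ℝ≥0}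
    (hg : LipschitzWith L g) (α β t : ℝ) {B : Set X} (hB : B.Nonempty) {m : X → E}
    (hm : IsBounded (m '' B)) {h : E → ℝ}
    (hh : ∀ z, h z = sInf ((fun b ↦ α * g (m b + z) ^ 2 + β * ‖m b + z‖ ^ 2) '' B) + t) :
    ∃ K > 0, (∀ z₁ z₂, |h z₁ - h z₂| ≤ K * (1 + ‖z₁‖ + ‖z₂‖) * ‖z₁ - z₂‖) ∧ |h 0| ≤ K := by
  have h_cost := ((LipschitzWithLinearGrowth.sq_of_lipschitzWith hg).const_mul α).add
    ((LipschitzWithLinearGrowth.sq_of_lipschitzWith (lipschitzWith_one_norm (E := E))).const_mul β)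
  obtain ⟨K, hK⟩ := h_cost.sInf_image_translate hB hm
  have h_lip : LipschitzWithLinearGrowth K h := funext hh ▸ hK.add_const t
  have hK_le : K ≤ K + ‖h 0‖₊ + 1 := by rw [add_assoc]; exact le_self_add
  have h_zero_le : ‖h 0‖₊ ≤ K + ‖h 0‖₊ + 1 := (le_add_left le_rfl).trans le_self_add
  exact ⟨↑(K + ‖h 0‖₊ + 1), by positivity, h_lip.mono hK_le, h_zero_le⟩

/-- the saddle value function
`h(z) = inf_{b ∈ 𝔹} [ −(1/2)δ(1−δ) dist²((σ⁻¹(b−r𝟙)+z)/(1−δ), σᵀΠ)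
  + (1/2)(δ/(1−δ))‖σ⁻¹(b−r𝟙)+z‖² ] + δr`
satisfies `|h(z₁) − h(z₂)| ≤ K(1 + ‖z₁‖ + ‖z₂‖)‖z₁ − z₂‖` and `|h(0)| ≤ K`
for some constant `K > 0`. -/
theorem stmt_14 (d : ℕ) (δ r : ℝ) (hδ : δ ∈ Set.Ioo (0 : ℝ) 1) (hr : 0 ≤ r)
    (σ : Matrix (Fin d) (Fin d) ℝ) (hσ : IsUnit σ.det)
    (Pset : Set (EuclideanSpace ℝ (Fin d))) (hPclosed : IsClosed Pset)
    (hPconv : Convex ℝ Pset) (hP0 : (0 : EuclideanSpace ℝ (Fin d)) ∈ Pset)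
    (Bset : Set (EuclideanSpace ℝ (Fin d))) (hBne : Bset.Nonempty)
    (hBcomp : IsCompact Bset)
    (ones : EuclideanSpace ℝ (Fin d)) (hones : ∀ i, ones i = 1)
    (h : EuclideanSpace ℝ (Fin d) → ℝ)
    (hh : ∀ z, h z = sInf ((fun b : EuclideanSpace ℝ (Fin d) =>
        -(1 / 2) * δ * (1 - δ) *
          (Metric.infDist ((1 / (1 - δ)) • (mvE σ⁻¹ (b - r • ones) + z))
            ((fun p => mvE σᵀ p) '' Pset)) ^ 2
        + 1 / 2 * (δ / (1 - δ)) * ‖mvE σ⁻¹ (b - r • ones) + z‖ ^ 2) '' Bset)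
      + δ * r) :
    ∃ K > 0, (∀ z₁ z₂ : EuclideanSpace ℝ (Fin d),
      |h z₁ - h z₂| ≤ K * (1 + ‖z₁‖ + ‖z₂‖) * ‖z₁ - z₂‖) ∧ |h 0| ≤ K :=
  have h_drift : Continuous fun b ↦ mvE σ⁻¹ (b - r • ones) :=
    (continuous_mvE σ⁻¹).comp (continuous_id.sub continuous_const)
  stmt_14_general (lipschitzWith_infDist_const_smul (1 / (1 - δ)) ((fun p ↦ mvE σᵀ p) '' Pset))
    _ _ _ hBne (hBcomp.image h_drift).isBounded hh
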